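/- Let s > 0 be the unique real number with ∑_{i=1}^m λ^{p_i·s} = 1 (the similarity dimension of E). Then the Hausdorff dimension of E equals s if and only if the open set condition holds for {S_i}_{i=1}^m. -/

import Mathlib

open Polynomial Filter

noncomputable section

namespace PVOSC

variable {m : ℕ}

/-- `λ⁻¹` is a Pisot (P.V.) number: an algebraic integer `> 1` all of whose
Galois conjugates other than itself have complex absolute value `< 1`. -/
def IsPisot (θ : ℝ) : Prop :=
  1 < θ ∧ IsIntegral ℤ θ ∧
    ∀ z : ℂ, aeval z (minpoly ℤ θ) = 0 → z ≠ (θ : ℂ) → ‖z‖ < 1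

/-- `p_σ` for a finite word `σ`. -/
def wordP (p : Fin m → ℕ) (σ : List (Fin m)) : ℕ := (σ.map p).sum

/-- The contracting similitude `S_i(x) = λ^{p_i} x + b_i`. -/
def Smap (lam : ℝ) (p : Fin m → ℕ) (b : Fin m → ℝ) (i : Fin m) : ℝ → ℝ :=
  fun x => lam ^ p i * x + b i

/-- `S_σ = S_{i₁} ∘ ⋯ ∘ S_{i_k}` for `σ = i₁ ⋯ i_k`. -/
def SW (lam : ℝ) (p : Fin m → ℕ) (b : Fin m → ℝ) (σ : List (Fin m)) : ℝ → ℝ :=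
  σ.foldr (fun i f => Smap lam p b i ∘ f) id

/-- `b_σ`, the translation part of `S_σ`. -/
def wordB (lam : ℝ) (p : Fin m → ℕ) (b : Fin m → ℝ) (σ : List (Fin m)) : ℝ :=
  SW lam p b σ 0

/-- `B = {0, b₁, …, b_m}`. -/
def Bset (b : Fin m → ℝ) : Set ℝ := insert 0 (Set.range b)

/-- `B − B`. -/
def BB (b : Fin m → ℝ) : Set ℝ := {x | ∃ u ∈ Bset b, ∃ v ∈ Bset b, x = u - v}

/-- `max_i |b_i|`. -/
def bmax (b : Fin m → ℝ) : ℝ := ⨆ i, |b i|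

/-- The set `𝒞`. -/
def Cset (lam : ℝ) (b : Fin m → ℝ) (T : ℕ) : Set ℝ :=
  {x | |x| ≤ (1 + lam ^ (1 - (T : ℤ))) * bmax b / (1 - lam) ∧
    ∃ R : ℝ[X], (∀ n, R.coeff n ∈ BB b) ∧ lam ^ (2 - (T : ℤ)) * x = R.eval lam⁻¹}

/-- The vertex set `Ξ = {n ∈ ℤ : |n| ≤ T−1} × 𝒞`. -/
def Xi (lam : ℝ) (b : Fin m → ℝ) (T : ℕ) : Set (ℤ × ℝ) :=
  {v | |v.1| ≤ (T : ℤ) - 1 ∧ v.2 ∈ Cset lam b T}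

/-- The open set condition. -/
def OSC (lam : ℝ) (p : Fin m → ℕ) (b : Fin m → ℝ) : Prop :=
  ∃ U : Set ℝ, U.Nonempty ∧ IsOpen U ∧ (⋃ i, Smap lam p b i '' U) ⊆ U ∧
    ∀ i j : Fin m, i ≠ j → Smap lam p b i '' U ∩ Smap lam p b j '' U = ∅

/-- The strong separation condition for the attractor `E`. -/
def SSC (lam : ℝ) (p : Fin m → ℕ) (b : Fin m → ℝ) (E : Set ℝ) : Prop :=
  ∀ i j : Fin m, i ≠ j → Smap lam p b i '' E ∩ Smap lam p b j '' E = ∅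

/-- Group law on `ℤ × ℝ`: `(p₁,c₁)·(p₂,c₂) = (p₁+p₂, λ^{p₁} c₂ + c₁)`. -/
def gmul (lam : ℝ) (u v : ℤ × ℝ) : ℤ × ℝ := (u.1 + v.1, lam ^ u.1 * v.2 + u.2)

/-- Inverse for the group law: `(p,c)⁻¹ = (−p, −λ^{−p} c)`. -/
def ginv (lam : ℝ) (u : ℤ × ℝ) : ℤ × ℝ := (-u.1, -(lam ^ (-u.1) * u.2))

/-- The group element `(p_σ, b_σ)` associated to a finite word `σ`. -/
def elem (lam : ℝ) (p : Fin m → ℕ) (b : Fin m → ℝ) (σ : List (Fin m)) : ℤ × ℝ :=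
  ((wordP p σ : ℤ), wordB lam p b σ)

/-- The sequence `(q_k, c_k)` with the recursive structure w.r.t. `({α_k}, {β_k})`:
`recSeq … k = (q_{k+1}, c_{k+1})`, i.e. index `k` corresponds to `(q_{k+1}, c_{k+1})`. -/
def recSeq (lam : ℝ) (p : Fin m → ℕ) (b : Fin m → ℝ) (α β : ℕ → List (Fin m)) : ℕ → ℤ × ℝ
  | 0 => gmul lam (ginv lam (elem lam p b (β 0))) (elem lam p b (α 0))
  | (k+1) => gmul lam (ginv lam (elem lam p b (β (k+1))))
      (gmul lam (recSeq lam p b α β k) (elem lam p b (α (k+1))))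

/-- The edge relation of the directed graph `G` on `Ξ`. -/
def edge (lam : ℝ) (p : Fin m → ℕ) (b : Fin m → ℝ) (T : ℕ) (u v : ℤ × ℝ) : Prop :=
  u ∈ Xi lam b T ∧ v ∈ Xi lam b T ∧
    ∃ α β : List (Fin m), 1 ≤ wordP p α ∧ wordP p α ≤ 2 * T - 1 ∧
      1 ≤ wordP p β ∧ wordP p β ≤ 2 * T - 1 ∧
      v.1 = (wordP p α : ℤ) + u.1 - (wordP p β : ℤ) ∧
      v.2 = lam ^ (-(wordP p β : ℤ)) * u.2 + lam ^ (u.1 - (wordP p β : ℤ)) * wordB lam p b α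
        - lam ^ (-(wordP p β : ℤ)) * wordB lam p b β

/-- `Λ = Ξ ∩ {(p_j − p_i, λ^{−p_i}(b_j − b_i)) : i ≠ j}`. -/
def Lam (lam : ℝ) (p : Fin m → ℕ) (b : Fin m → ℝ) (T : ℕ) : Set (ℤ × ℝ) :=
  Xi lam b T ∩ {v | ∃ i j : Fin m, i ≠ j ∧
    v = ((p j : ℤ) - (p i : ℤ), lam ^ (-(p i : ℤ)) * (b j - b i))}

/-- The length-`k` prefix of an infinite word `ω`. -/
def prefixList (ω : ℕ → Fin m) (k : ℕ) : List (Fin m) := (List.range k).map ω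

/-! ### Words -/

lemma wordP_nil (p : Fin m → ℕ) : wordP p [] = 0 := rfl

lemma wordP_cons (p : Fin m → ℕ) (i : Fin m) (σ : List (Fin m)) :
    wordP p (i :: σ) = p i + wordP p σ := by simp [wordP]

lemma wordP_append (p : Fin m → ℕ) (σ τ : List (Fin m)) :
    wordP p (σ ++ τ) = wordP p σ + wordP p τ := by simp [wordP]

lemma SW_nil (lam : ℝ) (p : Fin m → ℕ) (b : Fin m → ℝ) (x : ℝ) : SW lam p b [] x = x := rfl

lemma SW_cons (lam : ℝ) (p : Fin m → ℕ) (b : Fin m → ℝ) (i : Fin m) (σ : List (Fin m)) (x : ℝ) :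
    SW lam p b (i :: σ) x = lam ^ p i * SW lam p b σ x + b i := rfl

lemma SW_append (lam : ℝ) (p : Fin m → ℕ) (b : Fin m → ℝ) (σ τ : List (Fin m)) (x : ℝ) :
    SW lam p b (σ ++ τ) x = SW lam p b σ (SW lam p b τ x) := by
  induction σ with
  | nil => rfl
  | cons i σ ih => rw [List.cons_append, SW_cons, SW_cons, ih]

lemma SW_eq (lam : ℝ) (p : Fin m → ℕ) (b : Fin m → ℝ) (σ : List (Fin m)) (x : ℝ) :
    SW lam p b σ x = lam ^ wordP p σ * x + wordB lam p b σ := by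
  induction σ with
  | nil => simp [SW_nil, wordB, wordP_nil]
  | cons i σ ih =>
    simp only [wordB] at ih ⊢
    rw [SW_cons, SW_cons, ih, wordP_cons, pow_add]; ring

lemma wordB_cons (lam : ℝ) (p : Fin m → ℕ) (b : Fin m → ℝ) (i : Fin m) (σ : List (Fin m)) :
    wordB lam p b (i :: σ) = lam ^ p i * wordB lam p b σ + b i := rfl

lemma wordP_pos {p : Fin m → ℕ} (hp : ∀ i, 1 ≤ p i) {σ : List (Fin m)} (h : σ ≠ []) :
    1 ≤ wordP p σ := by
  cases σ with
  | nil => exact absurd rfl h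
  | cons i σ => rw [wordP_cons]; have := hp i; omega

lemma length_le_wordP {p : Fin m → ℕ} (hp : ∀ i, 1 ≤ p i) (σ : List (Fin m)) :
    σ.length ≤ wordP p σ := by
  induction σ with
  | nil => simp
  | cons i σ ih => rw [wordP_cons]; have := hp i; simp; omega

/-! ### Garsia-type finiteness -/

lemma pisot_finite {θ : ℝ} (h : IsPisot θ) (C : ℝ) :
    {y : ℝ | ∃ R : ℤ[X], y = aeval θ R ∧ |y| ≤ C ∧
      ∀ z : ℂ, ‖z‖ < 1 → ‖aeval z R‖ ≤ C / (1 - ‖z‖)}.Finite := by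
  obtain ⟨h1, hint, hconj⟩ := h
  have hintQ : IsIntegral ℚ θ := hint.tower_top
  let K := IntermediateField.adjoin ℚ {θ}
  have : FiniteDimensional ℚ K := IntermediateField.adjoin.finiteDimensional hintQ
  have : NumberField K := ⟨⟩
  let g : K := IntermediateField.AdjoinSimple.gen ℚ θ
  have hg : algebraMap K ℝ g = θ := IntermediateField.AdjoinSimple.algebraMap_gen ℚ θ
  have hgint : IsIntegral ℤ g := by
    have : IsIntegral ℤ (algebraMap K ℝ g) := by rw [hg]; exact hint
    exact (isIntegral_algebraMap_iff (algebraMap K ℝ).injective).1 this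
  have hroot : ∀ φ : K →+* ℂ, aeval (φ g) (minpoly ℤ θ) = 0 := by
    intro φ
    have h0 : aeval g (minpoly ℤ θ) = 0 := by
      apply (algebraMap K ℝ).injective
      rw [map_zero, ← aeval_algebraMap_apply, hg, minpoly.aeval]
    have := congrArg φ h0
    rw [map_zero] at this
    rw [← this]
    exact aeval_algHom_apply (φ.toIntAlgHom) g _
  have key := NumberField.Embeddings.finite_of_norm_le K ℂ
    (|C| + ∑ φ : K →+* ℂ, |C / (1 - ‖φ g‖)|)
  refine (key.image (algebraMap K ℝ)).subset ?_
  rintro y ⟨R, rfl, hy, hz⟩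
  refine ⟨aeval g R, ⟨?_, ?_⟩, ?_⟩
  · exact IsIntegral.of_mem_of_fg (Algebra.adjoin ℤ {g}) hgint.fg_adjoin_singleton _
      (aeval_mem_adjoin_singleton ℤ g)
  · intro φ
    have e : φ (aeval g R) = aeval (φ g) R := (aeval_algHom_apply (φ.toIntAlgHom) g _).symm
    rw [e]
    have hs0 : 0 ≤ ∑ φ : K →+* ℂ, |C / (1 - ‖φ g‖)| := Finset.sum_nonneg fun _ _ => abs_nonneg _
    by_cases hc : φ g = (θ : ℂ)
    · rw [hc]
      have : aeval (θ : ℂ) R = ((aeval θ R : ℝ) : ℂ) := by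
        have := aeval_algebraMap_apply ℂ θ R
        simpa using this
      rw [this, Complex.norm_real, Real.norm_eq_abs]
      have := le_abs_self C
      linarith
    · have h2 := hz _ (hconj _ (hroot φ) hc)
      have h3 := Finset.single_le_sum (f := fun φ : K →+* ℂ => |C / (1 - ‖φ g‖)|)
        (fun _ _ => abs_nonneg _) (Finset.mem_univ φ)
      have h4 := le_abs_self (C / (1 - ‖φ g‖))
      have := abs_nonneg C
      linarith
  · rw [← aeval_algebraMap_apply, hg]

/-- integer polynomial attached to a word -/
def Qpol (p : Fin m → ℕ) (z : Fin m → ℤ) : List (Fin m) → ℤ[X]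
  | [] => 0
  | i :: σ => Qpol p z σ + C (z i) * X ^ (p i + wordP p σ)

lemma Qpol_eval {lam : ℝ} (h0 : 0 < lam) (p : Fin m → ℕ) {b : Fin m → ℝ} {z : Fin m → ℤ} {D : ℝ}
    (hz : ∀ i, D * b i = z i) (σ : List (Fin m)) :
    aeval lam⁻¹ (Qpol p z σ) = D * wordB lam p b σ * lam⁻¹ ^ wordP p σ := by
  induction σ with
  | nil => simp [Qpol, wordB, SW_nil]
  | cons i σ ih =>
    rw [Qpol, map_add, ih, wordB_cons, wordP_cons]
    simp only [map_mul, map_pow, aeval_X, eq_intCast, map_intCast]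
    rw [← hz i, pow_add]
    have : lam ^ p i * lam⁻¹ ^ p i = 1 := by rw [← mul_pow, mul_inv_cancel₀ h0.ne', one_pow]
    linear_combination (-D * wordB lam p b σ * lam⁻¹ ^ wordP p σ) * this

lemma Qpol_bound {p : Fin m → ℕ} (hp : ∀ i, 1 ≤ p i) {z : Fin m → ℤ} {Z : ℝ} (hZ0 : 0 ≤ Z)
    (hZ : ∀ i, |(z i : ℝ)| ≤ Z) (σ : List (Fin m)) {w : ℂ} (hw : ‖w‖ < 1) :
    ‖aeval w (Qpol p z σ)‖ ≤ Z / (1 - ‖w‖) := by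
  have hpos : 0 < 1 - ‖w‖ := by linarith
  have key : ‖aeval w (Qpol p z σ)‖ ≤ Z * (1 - ‖w‖ ^ (wordP p σ + 1)) / (1 - ‖w‖) := by
    induction σ with
    | nil => simp [Qpol, wordP_nil, hpos.ne', hZ0]
    | cons i σ ih =>
      rw [Qpol, map_add]
      refine (norm_add_le _ _).trans ?_
      have h1 : ‖aeval w (C (z i) * X ^ (p i + wordP p σ))‖ ≤ Z * ‖w‖ ^ (p i + wordP p σ) := by
        simp only [map_mul, map_pow, aeval_X, eq_intCast, map_intCast, norm_mul,
          norm_pow, Complex.norm_intCast]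
        exact mul_le_mul_of_nonneg_right (hZ i) (by positivity)
      refine (add_le_add ih h1).trans ?_
      rw [wordP_cons, le_div_iff₀ hpos, add_mul, div_mul_cancel₀ _ hpos.ne']
      have h2 : ‖w‖ ^ (p i + wordP p σ) ≤ ‖w‖ ^ (wordP p σ + 1) :=
        pow_le_pow_of_le_one (norm_nonneg _) hw.le (by have := hp i; omega)
      have h3 : ‖w‖ ^ (p i + wordP p σ + 1) = ‖w‖ ^ (p i + wordP p σ) * ‖w‖ := pow_succ _ _
      rw [h3]
      nlinarith [mul_le_mul_of_nonneg_left h2 hZ0]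
  refine key.trans ?_
  gcongr
  have : 0 ≤ ‖w‖ ^ (wordP p σ + 1) := by positivity
  nlinarith

lemma exists_den (b : Fin m → ℝ) (hbQ : ∀ i, ∃ q : ℚ, b i = (q : ℝ)) :
    ∃ D : ℝ, 0 < D ∧ ∃ z : Fin m → ℤ, ∀ i, D * b i = z i := by
  choose q hq using hbQ
  refine ⟨((∏ i, (q i).den : ℕ) : ℝ), ?_, fun i => (∏ j ∈ Finset.univ.erase i, ((q j).den : ℤ)) * (q i).num, ?_⟩
  · exact_mod_cast Finset.prod_pos fun i _ => (q i).den_pos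
  · intro i
    rw [hq, ← Finset.mul_prod_erase _ _ (Finset.mem_univ i)]
    have h := Rat.den_mul_eq_num (q i)
    have h' : ((q i).den : ℝ) * (q i : ℝ) = ((q i).num : ℝ) := by exact_mod_cast h
    push_cast
    rw [← h']; ring

lemma garsia {lam : ℝ} (h0 : 0 < lam) (hPisot : IsPisot lam⁻¹)
    {p : Fin m → ℕ} (hp : ∀ i, 1 ≤ p i) {b : Fin m → ℝ} (hbQ : ∀ i, ∃ q : ℚ, b i = (q : ℝ))
    (K : ℕ) (C : ℝ) :
    {t : ℝ | |t| ≤ C ∧ ∃ α β : List (Fin m), wordP p α ≤ wordP p β + K ∧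
      wordB lam p b α - wordB lam p b β = lam ^ wordP p β * t}.Finite := by
  obtain ⟨D, hD, z, hz⟩ := exists_den b hbQ
  set Z : ℝ := ∑ i, |(z i : ℝ)| with hZdef
  have hZ0 : 0 ≤ Z := Finset.sum_nonneg fun _ _ => abs_nonneg _
  have hZ : ∀ i, |(z i : ℝ)| ≤ Z := fun i =>
    Finset.single_le_sum (f := fun i => |(z i : ℝ)|) (fun _ _ => abs_nonneg _) (Finset.mem_univ i)
  have hA : 0 < lam⁻¹ ^ K * D := by positivity
  set C' : ℝ := max (lam⁻¹ ^ K * D * C) (2 * Z)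
  refine ((pisot_finite hPisot C').image fun y => y / (lam⁻¹ ^ K * D)).subset ?_
  rintro t ⟨ht, α, β, hK, hab⟩
  refine ⟨lam⁻¹ ^ K * D * t, ⟨X ^ (wordP p β + K - wordP p α) * Qpol p z α - X ^ K * Qpol p z β,
    ?_, ?_, ?_⟩, ?_⟩
  · simp only [map_sub, map_mul, map_pow, aeval_X]
    rw [Qpol_eval h0 p hz, Qpol_eval h0 p hz]
    have e1 : lam⁻¹ ^ (wordP p β + K - wordP p α) * (lam⁻¹ ^ wordP p α) =
      lam⁻¹ ^ wordP p β * lam⁻¹ ^ K := by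
      rw [← pow_add, ← pow_add]; congr 1; omega
    have e2 : lam ^ wordP p β * lam⁻¹ ^ wordP p β = 1 := by
      rw [← mul_pow, mul_inv_cancel₀ h0.ne', one_pow]
    linear_combination (-D * lam⁻¹ ^ K * t) * e2 - D * lam⁻¹ ^ K * lam⁻¹ ^ wordP p β * hab - D * wordB lam p b α * e1
  · rw [abs_mul, abs_of_pos hA]
    exact (mul_le_mul_of_nonneg_left ht hA.le).trans (le_max_left _ _)
  · intro w hw
    have hpos : 0 < 1 - ‖w‖ := by linarith
    simp only [map_sub, map_mul, map_pow, aeval_X]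
    have hm' : ∀ n σ, ‖w ^ n * aeval w (Qpol p z σ)‖ ≤ Z / (1 - ‖w‖) := by
      intro n σ
      rw [norm_mul, norm_pow]
      calc _ ≤ 1 * ‖aeval w (Qpol p z σ)‖ := by
            gcongr; exact pow_le_one₀ (norm_nonneg _) hw.le
        _ ≤ _ := by rw [one_mul]; exact Qpol_bound hp hZ0 hZ σ hw
    calc _ ≤ Z / (1 - ‖w‖) + Z / (1 - ‖w‖) := (norm_sub_le _ _).trans (add_le_add (hm' _ _) (hm' _ _))
      _ = 2 * Z / (1 - ‖w‖) := by ring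
      _ ≤ _ := by gcongr; exact le_max_right _ _
  · simp only; field_simp

/-- No exact overlaps. -/
def NEO (lam : ℝ) (p : Fin m → ℕ) (b : Fin m → ℝ) : Prop :=
  ∀ α β : List (Fin m), wordP p α = wordP p β → wordB lam p b α = wordB lam p b β → α = β

lemma count {lam : ℝ} (h0 : 0 < lam) (hPisot : IsPisot lam⁻¹)
    {p : Fin m → ℕ} (hp : ∀ i, 1 ≤ p i) {b : Fin m → ℝ} (hbQ : ∀ i, ∃ q : ℚ, b i = (q : ℝ))
    (hN : NEO lam p b) (K : ℕ) (C : ℝ) :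
    ∃ N : ℕ, ∀ β : List (Fin m),
      {α : List (Fin m) | wordP p α ≤ wordP p β + K ∧ wordP p β ≤ wordP p α + K ∧
        |wordB lam p b α - wordB lam p b β| ≤ C * lam ^ wordP p β}.Finite ∧
      {α : List (Fin m) | wordP p α ≤ wordP p β + K ∧ wordP p β ≤ wordP p α + K ∧
        |wordB lam p b α - wordB lam p b β| ≤ C * lam ^ wordP p β}.ncard ≤ N := by
  have hG := garsia h0 hPisot hp hbQ K C
  set G := {t : ℝ | |t| ≤ C ∧ ∃ α β : List (Fin m), wordP p α ≤ wordP p β + K ∧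
      wordB lam p b α - wordB lam p b β = lam ^ wordP p β * t} with hGdef
  have hF : (Set.Icc (-(K : ℤ)) K ×ˢ G).Finite := (Set.finite_Icc _ _).prod hG
  refine ⟨(Set.Icc (-(K : ℤ)) K ×ˢ G).ncard, fun β => ?_⟩
  set f : List (Fin m) → ℤ × ℝ := fun α => ((wordP p α : ℤ) - wordP p β,
    (lam ^ wordP p β)⁻¹ * (wordB lam p b α - wordB lam p b β)) with hf
  have hpos : 0 < lam ^ wordP p β := by positivity
  have hmaps : ∀ α ∈ {α : List (Fin m) | wordP p α ≤ wordP p β + K ∧ wordP p β ≤ wordP p α + K ∧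
        |wordB lam p b α - wordB lam p b β| ≤ C * lam ^ wordP p β},
        f α ∈ Set.Icc (-(K : ℤ)) K ×ˢ G := by
    rintro α ⟨h1, h2, h3⟩
    refine ⟨⟨by simp only [hf]; omega, by simp only [hf]; omega⟩, ?_, α, β, h1, ?_⟩
    · simp only [hf]
      rw [abs_mul, abs_of_pos (inv_pos.2 hpos), inv_mul_le_iff₀ hpos]
      linarith
    · simp only [hf]; field_simp
  have hinj : Function.Injective f := by
    intro α α' h
    simp only [hf, Prod.mk.injEq] at h
    apply hN
    · have := h.1; omega
    · have := mul_left_cancel₀ (inv_pos.2 hpos).ne' h.2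
      linarith
  exact ⟨Set.Finite.of_injOn (f := f) hmaps hinj.injOn hF,
    Set.ncard_le_ncard_of_injOn f hmaps hinj.injOn hF⟩

/-! ### The attractor -/

lemma SW_mem {lam : ℝ} {p : Fin m → ℕ} {b : Fin m → ℝ} {E : Set ℝ}
    (hE : E = ⋃ i, Smap lam p b i '' E) (σ : List (Fin m)) {x : ℝ} (hx : x ∈ E) :
    SW lam p b σ x ∈ E := by
  induction σ with
  | nil => exact hx
  | cons i σ ih =>
    rw [hE]
    exact Set.mem_iUnion.2 ⟨i, _, ih, rfl⟩

lemma exists_letter {lam : ℝ} {p : Fin m → ℕ} {b : Fin m → ℝ} {E : Set ℝ}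
    (hE : E = ⋃ i, Smap lam p b i '' E) {x : ℝ} (hx : x ∈ E) :
    ∃ i, ∃ y ∈ E, x = lam ^ p i * y + b i := by
  rw [hE] at hx
  obtain ⟨i, y, hy, rfl⟩ := Set.mem_iUnion.1 hx
  exact ⟨i, y, hy, rfl⟩

lemma extend {lam : ℝ} {p : Fin m → ℕ} (hp : ∀ i, 1 ≤ p i) {b : Fin m → ℝ} {E : Set ℝ}
    (hE : E = ⋃ i, Smap lam p b i '' E) {P : ℕ} (hP1 : 1 ≤ P) (hP : ∀ i, p i ≤ P) (n : ℕ) :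
    ∀ x ∈ E, ∃ α, n ≤ wordP p α ∧ wordP p α < n + P ∧ x ∈ SW lam p b α '' E := by
  induction n using Nat.strong_induction_on with
  | _ n ih =>
    intro x hx
    rcases Nat.eq_zero_or_pos n with rfl | hn
    · exact ⟨[], by simp, by simp [wordP_nil]; omega, x, hx, rfl⟩
    obtain ⟨i, y, hy, rfl⟩ := exists_letter hE hx
    have h1 := hp i
    have h2 := hP i
    by_cases h : n ≤ p i
    · exact ⟨[i], by simpa [wordP] using h, by simp [wordP]; omega, y, hy, rfl⟩
    · obtain ⟨α, ha, hb, e, he, rfl⟩ := ih (n - p i) (by omega) y hy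
      exact ⟨i :: α, by rw [wordP_cons]; omega, by rw [wordP_cons]; omega, e, he, rfl⟩

lemma adjust {lam : ℝ} {p : Fin m → ℕ} (hp : ∀ i, 1 ≤ p i) {b : Fin m → ℝ} {E : Set ℝ}
    (hE : E = ⋃ i, Smap lam p b i '' E) {P : ℕ} (hP1 : 1 ≤ P) (hP : ∀ i, p i ≤ P)
    {n : ℕ} (hn : 1 ≤ n) (j : Fin m) (σ : List (Fin m)) {x : ℝ}
    (hx : x ∈ SW lam p b (j :: σ) '' E) :
    ∃ α, n ≤ wordP p (j :: α) ∧ wordP p (j :: α) < n + P ∧ x ∈ SW lam p b (j :: α) '' E := by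
  induction σ generalizing n j x with
  | nil =>
    obtain ⟨e, he, rfl⟩ := hx
    obtain ⟨α, ha, hb, e₁, he₁, rfl⟩ := extend hp hE hP1 hP (n - p j) e he
    have h2 := hP j
    by_cases h : n ≤ p j
    · exact ⟨[], by simpa [wordP] using h, by simp [wordP]; omega, _, SW_mem hE α he₁, rfl⟩
    · exact ⟨α, by rw [wordP_cons]; omega, by rw [wordP_cons]; omega, e₁, he₁, rfl⟩
  | cons k σ ih =>
    obtain ⟨e, he, rfl⟩ := hx
    have h2 := hP j
    by_cases h : n ≤ p j
    · exact ⟨[], by simpa [wordP] using h, by simp [wordP]; omega, _, SW_mem hE (k :: σ) he, rfl⟩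
    · obtain ⟨α, ha, hb, e', he', h'⟩ := ih (n := n - p j) (by omega) k ⟨e, he, rfl⟩
      refine ⟨k :: α, by rw [wordP_cons]; omega, by rw [wordP_cons]; omega, e', he', ?_⟩
      rw [SW_cons, h', ← SW_cons]

lemma neo_of_osc {lam : ℝ} (h0 : 0 < lam) {p : Fin m → ℕ} (hp : ∀ i, 1 ≤ p i) {b : Fin m → ℝ}
    (h : OSC lam p b) : NEO lam p b := by
  obtain ⟨U, ⟨u, hu⟩, -, hsub, hdis⟩ := h
  have hmem : ∀ σ, SW lam p b σ u ∈ U := by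
    intro σ
    induction σ with
    | nil => exact hu
    | cons i σ ih => exact hsub (Set.mem_iUnion.2 ⟨i, _, ih, rfl⟩)
  intro α
  induction α with
  | nil =>
    intro β h1 _
    by_contra hne
    have := wordP_pos hp (Ne.symm hne)
    rw [← h1, wordP_nil] at this
    omega
  | cons i α ih =>
    intro β h1 h2
    cases β with
    | nil =>
      rw [wordP_cons, wordP_nil] at h1
      have := hp i
      omega
    | cons j β =>
      by_cases hij : i = j
      · subst hij
        rw [wordP_cons, wordP_cons] at h1
        rw [wordB_cons, wordB_cons] at h2
        rw [ih β (by omega) (mul_left_cancel₀ (pow_pos h0 (p i)).ne' (by linarith))]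
      · exfalso
        have e : SW lam p b (i :: α) u = SW lam p b (j :: β) u := by
          rw [SW_eq, SW_eq, h1, h2]
        have : SW lam p b (i :: α) u ∈ Smap lam p b i '' U ∩ Smap lam p b j '' U :=
          ⟨⟨_, hmem α, rfl⟩, by rw [e]; exact ⟨_, hmem β, rfl⟩⟩
        rw [hdis i j hij] at this
        exact this

lemma osc_of_neo {lam : ℝ} (h0 : 0 < lam) (hlam1 : lam < 1) (hPisot : IsPisot lam⁻¹)
    (hm : 2 ≤ m) {p : Fin m → ℕ} (hp : ∀ i, 1 ≤ p i)
    {b : Fin m → ℝ} (hbQ : ∀ i, ∃ q : ℚ, b i = (q : ℝ))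
    {E : Set ℝ} (hEc : IsCompact E) (hEne : E.Nonempty)
    (hE : E = ⋃ i, Smap lam p b i '' E) (hN : NEO lam p b) : OSC lam p b := by
  obtain ⟨P, hP1, hP⟩ : ∃ P : ℕ, 1 ≤ P ∧ ∀ i, p i ≤ P :=
    ⟨1 + ∑ i, p i, by omega, fun i => by
      have := Finset.single_le_sum (f := p) (fun _ _ => Nat.zero_le _) (Finset.mem_univ i)
      omega⟩
  obtain ⟨M, hM⟩ : ∃ M : ℝ, ∀ x ∈ E, |x| < M := by
    obtain ⟨M, hM⟩ := hEc.isBounded.exists_norm_le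
    exact ⟨M + 1, fun x hx => by have := hM x hx; rw [Real.norm_eq_abs] at this; linarith⟩
  set H : Set ℝ := {y | ∃ i j τ σ, i ≠ j ∧ SW lam p b (i :: τ) y ∈ SW lam p b (j :: σ) '' E} with hH
  have hr : ∀ i, 0 < lam ^ p i := fun i => pow_pos h0 _
  have hpre : ∀ i y, ∃ x, lam ^ p i * x + b i = y := fun i y =>
    ⟨(y - b i) / lam ^ p i, by rw [mul_div_cancel₀ _ (hr i).ne']; ring⟩
  have hdist : ∀ i x y, dist (lam ^ p i * x + b i) (lam ^ p i * y + b i) = lam ^ p i * dist x y := by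
    intro i x y
    rw [Real.dist_eq, Real.dist_eq, ← abs_of_pos (hr i), ← abs_mul, abs_of_pos (hr i)]
    congr 1; ring
  have hHne : H.Nonempty := by
    obtain ⟨e, he⟩ := hEne
    obtain ⟨y, hy⟩ := hpre ⟨0, by omega⟩ (Smap lam p b ⟨1, by omega⟩ e)
    exact ⟨y, ⟨0, by omega⟩, ⟨1, by omega⟩, [], [], by simp, e, he, hy.symm⟩
  -- key point : a point of `E` outside the closure of `H`
  have hpt : ∃ x ∈ E, x ∉ closure H := by
    set I : List (Fin m) → Set (List (Fin m)) := fun β =>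
      {α | wordP p β ≤ wordP p α ∧ wordP p α < wordP p β + P ∧
        ∃ v, |v| < M ∧ SW lam p b β v ∈ SW lam p b α '' E} with hI
    obtain ⟨N, hcount⟩ := count h0 hPisot hp hbQ hN P (2 * M)
    have hIsub : ∀ β, I β ⊆ {α : List (Fin m) | wordP p α ≤ wordP p β + P ∧
        wordP p β ≤ wordP p α + P ∧
        |wordB lam p b α - wordB lam p b β| ≤ 2 * M * lam ^ wordP p β} := by
      rintro β α ⟨h1, h2, v, hv, e, he, hev⟩
      refine ⟨by omega, by omega, ?_⟩
      rw [SW_eq, SW_eq] at hev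
      have h3 : wordB lam p b α - wordB lam p b β = lam ^ wordP p β * v - lam ^ wordP p α * e := by
        linarith
      have h4 : lam ^ wordP p α ≤ lam ^ wordP p β := pow_le_pow_of_le_one h0.le hlam1.le h1
      have h5 : 0 < lam ^ wordP p β := pow_pos h0 _
      have h6 : 0 < lam ^ wordP p α := pow_pos h0 _
      have h7 := hM e he
      rw [h3]
      refine (abs_sub _ _).trans ?_
      rw [abs_mul, abs_mul, abs_of_pos h5, abs_of_pos h6]
      have := mul_le_mul h4 h7.le (abs_nonneg e) h5.le
      nlinarith
    have hfin : ∀ β, (I β).Finite := fun β => (hcount β).1.subset (hIsub β)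
    have hcard : ∀ β, (I β).ncard ≤ N := fun β =>
      (Set.ncard_le_ncard (hIsub β) (hcount β).1).trans (hcount β).2
    obtain ⟨β, hβ⟩ : ∃ β, ∀ β', (I β').ncard ≤ (I β).ncard := by
      have hbdd : BddAbove (Set.range fun β => (I β).ncard) := ⟨N, by rintro _ ⟨β, rfl⟩; exact hcard β⟩
      obtain ⟨β, hβ⟩ := Nat.sSup_mem (Set.range_nonempty fun β => (I β).ncard) hbdd
      refine ⟨β, fun β' => ?_⟩
      simp only at hβ
      rw [hβ]
      exact le_csSup hbdd ⟨β', rfl⟩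
    have hext : ∀ τ, ∀ α ∈ I (τ ++ β), ∃ α', α = τ ++ α' := by
      intro τ
      have hs : (fun α => τ ++ α) '' I β ⊆ I (τ ++ β) := by
        rintro _ ⟨α, ⟨h1, h2, v, hv, e, he, hev⟩, rfl⟩
        refine ⟨by simp only [wordP_append]; omega, by simp only [wordP_append]; omega,
          v, hv, e, he, ?_⟩
        rw [SW_append, SW_append, hev]
      have heq := Set.eq_of_subset_of_ncard_le hs (by
        rw [Set.ncard_image_of_injective _ (List.append_right_injective τ)]
        exact hβ _) (hfin _)
      intro α hα
      rw [← heq] at hα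
      obtain ⟨α', -, rfl⟩ := hα
      exact ⟨α', rfl⟩
    have hout : ∀ v, |v| < M → SW lam p b β v ∉ H := by
      rintro v hv ⟨i, j, τ, σ, hij, hmem⟩
      rw [← SW_append] at hmem
      obtain ⟨α, h1, h2, h3⟩ := adjust hp hE hP1 hP
        (wordP_pos hp (σ := i :: τ ++ β) (by simp)) j σ hmem
      obtain ⟨α', h4⟩ := hext (i :: τ) (j :: α) ⟨h1, h2, v, hv, h3⟩
      simp only [List.cons_append, List.cons.injEq] at h4
      exact hij h4.1.symm
    obtain ⟨e, he⟩ := hEne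
    refine ⟨SW lam p b β e, SW_mem hE β he, fun hcl => ?_⟩
    have hq : 0 < lam ^ wordP p β := pow_pos h0 _
    have hop : IsOpen {y : ℝ | |(y - wordB lam p b β) / lam ^ wordP p β| < M} :=
      isOpen_lt (by fun_prop) continuous_const
    obtain ⟨y, hy1, hy2⟩ := mem_closure_iff.1 hcl _ hop (by
      simp only [Set.mem_ofPred_eq]
      rw [SW_eq, add_sub_cancel_right, mul_div_cancel_left₀ _ hq.ne']
      exact hM e he)
    apply hout _ hy1
    rw [SW_eq, mul_div_cancel₀ _ hq.ne']
    simpa using hy2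
  set U : Set ℝ := {x | Metric.infDist x E < Metric.infDist x H} with hU
  have hle : ∀ i x, Metric.infDist (lam ^ p i * x + b i) E ≤ lam ^ p i * Metric.infDist x E := by
    intro i x
    obtain ⟨e, he, hxe⟩ := hEc.exists_infDist_eq_dist hEne x
    rw [hxe, ← hdist]
    exact Metric.infDist_le_dist_of_mem (SW_mem hE [i] he)
  have hkey : ∀ i j, i ≠ j → ∀ x ∈ U, ∀ x', lam ^ p i * x + b i = lam ^ p j * x' + b j →
      lam ^ p i * Metric.infDist x E < lam ^ p j * Metric.infDist x' E := by
    intro i j hij x hx x' hxx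
    obtain ⟨e, he, hxe⟩ := hEc.exists_infDist_eq_dist hEne x'
    rw [hxe, ← hdist, ← hxx]
    obtain ⟨y, hy⟩ := hpre i (lam ^ p j * e + b j)
    rw [← hy, hdist]
    have hyH : y ∈ H := ⟨i, j, [], [], hij, e, he, hy.symm⟩
    have := Metric.infDist_le_dist_of_mem (x := x) hyH
    exact mul_lt_mul_of_pos_left (lt_of_lt_of_le hx this) (hr i)
  refine ⟨U, ?_, ?_, ?_, ?_⟩
  · obtain ⟨x, hx, hxH⟩ := hpt
    refine ⟨x, ?_⟩
    simp only [hU, Set.mem_ofPred_eq]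
    rw [Metric.infDist_zero_of_mem hx]
    rcases (Metric.infDist_nonneg (x := x) (s := H)).lt_or_eq with h | h
    · exact h
    · exact absurd ((Metric.mem_closure_iff_infDist_zero hHne).2 h.symm) hxH
  · exact isOpen_lt (Metric.continuous_infDist_pt _) (Metric.continuous_infDist_pt _)
  · intro y hy
    obtain ⟨i, x, hx, rfl⟩ := Set.mem_iUnion.1 hy
    simp only [Smap, hU, Set.mem_ofPred_eq]
    refine (hle i x).trans_lt ((mul_lt_mul_of_pos_left hx (hr i)).trans_le ?_)
    rw [Metric.le_infDist hHne]
    rintro h ⟨k, j, τ, σ, hkj, hmem⟩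
    obtain ⟨h', rfl⟩ := hpre i h
    rw [hdist]
    refine mul_le_mul_of_nonneg_left (Metric.infDist_le_dist_of_mem ?_) (hr i).le
    refine ⟨k, j, τ ++ [i], σ, hkj, ?_⟩
    rw [← List.cons_append, SW_append]
    exact hmem
  · intro i j hij
    ext y
    simp only [Set.mem_inter_iff, Set.mem_empty_iff_false, iff_false]
    rintro ⟨⟨x, hx, rfl⟩, ⟨x', hx', hxx⟩⟩
    have h1 := hkey i j hij x hx x' hxx.symm
    have h2 := hkey j i hij.symm x' hx' x hxx
    linarith

/-! ### Dimension: upper bounds -/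

open MeasureTheory in
lemma dimH_le_of_cover {ι : Type*} [Fintype ι] {r c : ι → ℝ} (hr0 : ∀ i, 0 < r i)
    (hr1 : ∀ i, r i < 1) {E : Set ℝ} (hEc : IsCompact E)
    (hE : E ⊆ ⋃ i, (fun x => r i * x + c i) '' E) {t : ℝ} (ht : 0 < t)
    (hsum : ∑ i, r i ^ t ≤ 1) : dimH E ≤ ENNReal.ofReal t := by
  obtain ⟨M, hM0, hM⟩ : ∃ M : ℝ, 0 ≤ M ∧ ∀ x ∈ E, ∀ y ∈ E, dist x y ≤ M :=
    ⟨Metric.diam E, Metric.diam_nonneg, fun x hx y hy => Metric.dist_le_diam_of_mem hEc.isBounded hx hy⟩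
  obtain ⟨q, hq0, hq1, hq⟩ : ∃ q : ℝ, 0 ≤ q ∧ q < 1 ∧ ∀ i, r i ≤ q := by
    rcases isEmpty_or_nonempty ι with h | h
    · exact ⟨0, le_rfl, one_pos, fun i => h.elim i⟩
    · obtain ⟨i, hi⟩ := Finite.exists_max r
      exact ⟨r i, (hr0 i).le, hr1 i, hi⟩
  have hex : ∀ n : ℕ, ∃ T : (Fin n → ι) → Set ℝ, E ⊆ ⋃ f, T f ∧
      ∀ f, ∀ x ∈ T f, ∀ y ∈ T f, dist x y ≤ (∏ k, r (f k)) * M := by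
    intro n
    induction n with
    | zero =>
      refine ⟨fun _ => E, fun x hx => Set.mem_iUnion.2 ⟨Fin.elim0, hx⟩, ?_⟩
      intro f x hx y hy
      simpa using hM x hx y hy
    | succ n ih =>
      obtain ⟨T, hT1, hT2⟩ := ih
      refine ⟨fun f => (fun x => r (f 0) * x + c (f 0)) '' T (Fin.tail f), ?_, ?_⟩
      · intro x hx
        obtain ⟨i, y, hy, rfl⟩ := Set.mem_iUnion.1 (hE hx)
        obtain ⟨f, hf⟩ := Set.mem_iUnion.1 (hT1 hy)
        exact Set.mem_iUnion.2 ⟨Fin.cons i f, y, by simpa using hf, by simp⟩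
      · rintro f _ ⟨x, hx, rfl⟩ _ ⟨y, hy, rfl⟩
        have := hT2 _ x hx y hy
        rw [Fin.prod_univ_succ]
        rw [Real.dist_eq] at this ⊢
        have e : r (f 0) * x + c (f 0) - (r (f 0) * y + c (f 0)) = r (f 0) * (x - y) := by ring
        simp only
        rw [e, abs_mul, abs_of_pos (hr0 _), mul_assoc]
        exact mul_le_mul_of_nonneg_left this (hr0 _).le
  choose T hT1 hT2 using hex
  have hdiam : ∀ n f, Metric.ediam (T n f) ≤ ENNReal.ofReal ((∏ k, r (f k)) * M) := by
    intro n f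
    refine Metric.ediam_le fun x hx y hy => ?_
    rw [edist_dist]
    exact ENNReal.ofReal_le_ofReal (hT2 n f x hx y hy)
  have hprod0 : ∀ n (f : Fin n → ι), 0 ≤ ∏ k, r (f k) := fun n f =>
    Finset.prod_nonneg fun k _ => (hr0 _).le
  have hmain : Measure.hausdorffMeasure t E ≤ ENNReal.ofReal (M ^ t) := by
    refine (Measure.hausdorffMeasure_le_liminf_sum t E (l := atTop)
      (fun n : ℕ => ENNReal.ofReal (q ^ n * M)) ?_ T ?_ (Eventually.of_forall hT1)).trans ?_
    · have : Tendsto (fun n : ℕ => q ^ n * M) atTop (nhds (0 * M)) :=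
        (tendsto_pow_atTop_nhds_zero_of_lt_one hq0 hq1).mul_const M
      rw [zero_mul] at this
      simpa using ENNReal.tendsto_ofReal this
    · refine Eventually.of_forall fun n f => (hdiam n f).trans (ENNReal.ofReal_le_ofReal ?_)
      refine mul_le_mul_of_nonneg_right ?_ hM0
      calc ∏ k, r (f k) ≤ ∏ _k : Fin n, q := Finset.prod_le_prod (fun k _ => (hr0 _).le) fun k _ => hq _
        _ = q ^ n := by simp
    · have hb : ∀ n : ℕ, ∑ f, Metric.ediam (T n f) ^ t ≤ ENNReal.ofReal (M ^ t) := by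
        intro n
        calc ∑ f, Metric.ediam (T n f) ^ t
            ≤ ∑ f : Fin n → ι, ENNReal.ofReal ((∏ k, r (f k) ^ t) * M ^ t) := by
              refine Finset.sum_le_sum fun f _ => ?_
              refine (ENNReal.rpow_le_rpow (hdiam n f) ht.le).trans ?_
              rw [ENNReal.ofReal_rpow_of_nonneg (mul_nonneg (hprod0 n f) hM0) ht.le,
                Real.mul_rpow (hprod0 n f) hM0, Real.finsetProd_rpow _ _ fun k _ => (hr0 _).le]
          _ = ENNReal.ofReal (∑ f : Fin n → ι, (∏ k, r (f k) ^ t) * M ^ t) := by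
              rw [ENNReal.ofReal_sum_of_nonneg]
              intro f _
              exact mul_nonneg (Finset.prod_nonneg fun k _ => (Real.rpow_pos_of_pos (hr0 _) _).le)
                (Real.rpow_nonneg hM0 _)
          _ ≤ ENNReal.ofReal (M ^ t) := by
              apply ENNReal.ofReal_le_ofReal
              rw [← Finset.sum_mul, ← Fintype.sum_pow (fun i => r i ^ t)]
              have h1 : (∑ i, r i ^ t) ^ n ≤ 1 := pow_le_one₀
                (Finset.sum_nonneg fun i _ => (Real.rpow_pos_of_pos (hr0 _) _).le) hsum
              have := Real.rpow_nonneg hM0 t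
              nlinarith
      refine (liminf_le_liminf (Eventually.of_forall hb)).trans ?_
      simp
  have : dimH E ≤ (Real.toNNReal t : ENNReal) := by
    apply dimH_le_of_hausdorffMeasure_ne_top
    rw [Real.coe_toNNReal t ht.le]
    exact ne_top_of_le_ne_top ENNReal.ofReal_ne_top hmain
  exact this

lemma wordP_ofFn (p : Fin m → ℕ) {L : ℕ} (f : Fin L → Fin m) :
    wordP p (List.ofFn f) = ∑ k, p (f k) := by
  simp [wordP, List.map_ofFn, List.sum_ofFn]

lemma cover_words {lam : ℝ} {p : Fin m → ℕ} {b : Fin m → ℝ} {E : Set ℝ}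
    (hE : E = ⋃ i, Smap lam p b i '' E) (L : ℕ) :
    ∀ x ∈ E, ∃ f : Fin L → Fin m, x ∈ SW lam p b (List.ofFn f) '' E := by
  induction L with
  | zero => exact fun x hx => ⟨Fin.elim0, x, hx, by simp [SW_nil]⟩
  | succ L ih =>
    intro x hx
    obtain ⟨i, y, hy, rfl⟩ := exists_letter hE hx
    obtain ⟨f, e, he, rfl⟩ := ih y hy
    exact ⟨Fin.cons i f, e, he, by simp [List.ofFn_succ, SW_cons]⟩

lemma neo_of_dim {lam : ℝ} (h0 : 0 < lam) (hlam1 : lam < 1)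
    {p : Fin m → ℕ} (hp : ∀ i, 1 ≤ p i) {b : Fin m → ℝ}
    {E : Set ℝ} (hEc : IsCompact E)
    (hE : E = ⋃ i, Smap lam p b i '' E)
    {s : ℝ} (hs : 0 < s) (hsum : ∑ i : Fin m, lam ^ ((p i : ℝ) * s) = 1)
    (hdim : ENNReal.ofReal s ≤ dimH E) : NEO lam p b := by
  intro α β hP hB
  by_contra hne
  have hSeq : ∀ x, SW lam p b α x = SW lam p b β x := fun x => by rw [SW_eq, SW_eq, hP, hB]
  -- equal-length version
  have hcomm : α ++ β ≠ β ++ α := by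
    have aux : ∀ α β : List (Fin m), wordP p α = wordP p β → α.length ≤ β.length →
        α ++ β = β ++ α → α = β := by
      intro α β hP hl h
      have hpre : α <+: β := by
        apply List.prefix_of_prefix_length_le (l₃ := β ++ α) _ (List.prefix_append β α) hl
        rw [← h]; exact List.prefix_append α β
      obtain ⟨γ, rfl⟩ := hpre
      rw [wordP_append] at hP
      by_cases hγ : γ = []
      · simp [hγ]
      · have := wordP_pos hp hγ; omega
    intro h
    rcases le_total α.length β.length with hl | hl
    · exact hne (aux α β hP hl h)
    · exact hne (aux β α hP.symm hl h.symm).symm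
  set L := (α ++ β).length with hL
  have hL' : (β ++ α).length = L := by simp [hL]; omega
  have hL1 : 1 ≤ L := by
    by_contra hcon
    have hz : L = 0 := by omega
    have h1 : α ++ β = [] := List.length_eq_zero_iff.1 (hL ▸ hz)
    have h2 : β ++ α = [] := List.length_eq_zero_iff.1 (hL'.trans hz)
    exact hcomm (h1.trans h2.symm)
  obtain ⟨g, hg⟩ : ∃ g : Fin L → Fin m, List.ofFn g = α ++ β :=
    ⟨(α ++ β).get, List.ofFn_get _⟩
  obtain ⟨d, hd⟩ : ∃ d : Fin L → Fin m, List.ofFn d = β ++ α := by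
    rw [← hL']; exact ⟨(β ++ α).get, List.ofFn_get _⟩
  have hgd : g ≠ d := by rintro rfl; exact hcomm (hg.symm.trans hd)
  let ι := {f : Fin L → Fin m // f ≠ d}
  let r : (Fin L → Fin m) → ℝ := fun f => lam ^ wordP p (List.ofFn f)
  have hr0 : ∀ f, 0 < r f := fun f => pow_pos h0 _
  have hr1 : ∀ f, r f < 1 := fun f => by
    refine pow_lt_one₀ h0.le hlam1 ?_
    have := length_le_wordP hp (List.ofFn f)
    simp at this
    omega
  have hcov : E ⊆ ⋃ f : ι, (fun x => r f.1 * x + wordB lam p b (List.ofFn f.1)) '' E := by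
    intro x hx
    obtain ⟨f, e, he, hfx⟩ := cover_words hE L x hx
    by_cases hfd : f = d
    · refine Set.mem_iUnion.2 ⟨⟨g, hgd⟩, e, he, ?_⟩
      simp only [r]
      rw [← SW_eq, hg, ← hfx, hfd, hd, SW_append, SW_append, hSeq, SW_eq, SW_eq, SW_eq, SW_eq, hP, hB]
    · refine Set.mem_iUnion.2 ⟨⟨f, hfd⟩, e, he, ?_⟩
      simp only [r]
      rw [← SW_eq, hfx]
  have htot : ∑ f : Fin L → Fin m, r f ^ s = 1 := by
    have h1 : ∀ f : Fin L → Fin m, r f ^ s = ∏ k, lam ^ ((p (f k) : ℝ) * s) := by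
      intro f
      simp only [r]
      rw [wordP_ofFn, ← Real.rpow_natCast, ← Real.rpow_mul h0.le, ← Real.rpow_sum_of_pos h0]
      congr 1
      push_cast
      rw [Finset.sum_mul]
    simp only [h1]
    rw [← Fintype.sum_pow (fun i => lam ^ ((p i : ℝ) * s)), hsum, one_pow]
  have hlt : ∑ f : ι, r f.1 ^ s < 1 := by
    have h2 : ∑ f : ι, r f.1 ^ s = ∑ f ∈ Finset.univ.erase d, r f ^ s := by
      symm
      apply Finset.sum_subtype
      intro x; simp
    have h3 := Finset.add_sum_erase Finset.univ (fun f => r f ^ s) (Finset.mem_univ d)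
    have h4 := Real.rpow_pos_of_pos (hr0 d) s
    rw [h2]; linarith
  have hcont : Continuous fun t : ℝ => ∑ f : ι, r f.1 ^ t := by
    refine continuous_finsetSum _ fun f _ => ?_
    exact Real.continuous_const_rpow (hr0 _).ne'
  have hev : ∀ᶠ t in nhds s, ∑ f : ι, r f.1 ^ t < 1 ∧ 0 < t :=
    (hcont.continuousAt.eventually_lt continuousAt_const hlt).and (lt_mem_nhds hs)
  obtain ⟨t, ⟨ht1, ht0⟩, hts⟩ :=
    ((hev.filter_mono nhdsWithin_le_nhds).and (self_mem_nhdsWithin (s := Set.Iio s))).exists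
  have h5 := dimH_le_of_cover (fun f : ι => hr0 f.1) (fun f => hr1 f.1) hEc hcov ht0 ht1.le
  have h6 := hdim.trans h5
  rw [ENNReal.ofReal_le_ofReal_iff ht0.le] at h6
  exact absurd h6 (not_le.2 hts)

lemma dim_le {lam : ℝ} (h0 : 0 < lam) (hlam1 : lam < 1)
    {p : Fin m → ℕ} (hp : ∀ i, 1 ≤ p i) {b : Fin m → ℝ}
    {E : Set ℝ} (hEc : IsCompact E)
    (hE : E = ⋃ i, Smap lam p b i '' E)
    {s : ℝ} (hs : 0 < s) (hsum : ∑ i : Fin m, lam ^ ((p i : ℝ) * s) = 1) :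
    dimH E ≤ ENNReal.ofReal s := by
  refine dimH_le_of_cover (r := fun i => lam ^ p i) (c := b) (fun i => pow_pos h0 _)
    (fun i => pow_lt_one₀ h0.le hlam1 (by have := hp i; omega)) hEc hE.subset hs ?_
  refine le_of_eq (Eq.trans (Finset.sum_congr rfl fun i _ => ?_) hsum)
  rw [← Real.rpow_natCast, ← Real.rpow_mul h0.le]

/-! ### Dimension: lower bound -/

lemma prefixList_succ (ω : ℕ → Fin m) (n : ℕ) :
    prefixList ω (n + 1) = prefixList ω n ++ [ω n] := by
  simp [prefixList, List.range_succ]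

lemma prefixList_length (ω : ℕ → Fin m) (n : ℕ) : (prefixList ω n).length = n := by
  simp [prefixList]

lemma prefixList_eq_iff (ω ω' : ℕ → Fin m) (n : ℕ) :
    prefixList ω n = prefixList ω' n ↔ ∀ k < n, ω k = ω' k := by
  simp [prefixList]

lemma wordP_prefix (p : Fin m → ℕ) (ω : ℕ → Fin m) (n : ℕ) :
    wordP p (prefixList ω n) = ∑ k ∈ Finset.range n, p (ω k) := by
  induction n with
  | zero => rfl
  | succ n ih => rw [prefixList_succ, wordP_append, ih, Finset.sum_range_succ]; simp [wordP]

lemma exists_coding {lam : ℝ} (h0 : 0 < lam) (hlam1 : lam < 1)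
    {p : Fin m → ℕ} (hp : ∀ i, 1 ≤ p i) {b : Fin m → ℝ}
    {E : Set ℝ} (hEc : IsCompact E) (hEne : E.Nonempty)
    (hE : E = ⋃ i, Smap lam p b i '' E) :
    ∃ π : (ℕ → Fin m) → ℝ, Continuous π ∧ ∀ ω n, π ω ∈ SW lam p b (prefixList ω n) '' E := by
  have hcS : ∀ σ, Continuous (SW lam p b σ) := by
    intro σ
    have : SW lam p b σ = fun x => lam ^ wordP p σ * x + wordB lam p b σ := by
      ext x; exact SW_eq lam p b σ x
    rw [this]; fun_prop
  have hex : ∀ ω : ℕ → Fin m, ∃ x, ∀ n, x ∈ SW lam p b (prefixList ω n) '' E := by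
    intro ω
    obtain ⟨x, hx⟩ := IsCompact.nonempty_iInter_of_sequence_nonempty_isCompact_isClosed
      (fun n => SW lam p b (prefixList ω n) '' E) (by
        rintro n _ ⟨e, he, rfl⟩
        rw [prefixList_succ, SW_append]
        exact ⟨_, SW_mem hE [ω n] he, rfl⟩) (fun n => hEne.image _)
      (hEc.image (hcS _)) (fun n => (hEc.image (hcS _)).isClosed)
    exact ⟨x, fun n => Set.mem_iInter.1 hx n⟩
  choose π hπ using hex
  refine ⟨π, ?_, hπ⟩
  rw [continuous_iff_continuousAt]
  intro ω
  rw [Metric.continuousAt_iff']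
  intro ε hε
  have hlim : Tendsto (fun n : ℕ => lam ^ n * Metric.diam E) atTop (nhds 0) := by
    simpa using (tendsto_pow_atTop_nhds_zero_of_lt_one h0.le hlam1).mul_const (Metric.diam E)
  obtain ⟨n, hn⟩ := (hlim.eventually (gt_mem_nhds hε)).exists
  have hev : ∀ᶠ ω' in nhds ω, ∀ k ∈ Finset.range n, ω' k = ω k := by
    rw [Filter.eventually_all_finset]
    intro k _
    have hck : ContinuousAt (fun ω' : ℕ → Fin m => ω' k) ω := (continuous_apply k).continuousAt
    have hd : ∀ᶠ x in nhds (ω k), x = ω k := by rw [nhds_discrete]; simp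
    exact hck.eventually hd
  filter_upwards [hev] with ω' hω'
  have e : prefixList ω' n = prefixList ω n :=
    (prefixList_eq_iff _ _ _).2 fun k hk => hω' k (Finset.mem_range.2 hk)
  obtain ⟨x, hx, hx'⟩ := hπ ω' n
  obtain ⟨y, hy, hy'⟩ := hπ ω n
  rw [← hx', ← hy', e, SW_eq, SW_eq, Real.dist_eq]
  have h1 : |x - y| ≤ Metric.diam E := by
    rw [← Real.dist_eq]; exact Metric.dist_le_diam_of_mem hEc.isBounded hx hy
  have h2 : lam ^ wordP p (prefixList ω n) ≤ lam ^ n := by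
    apply pow_le_pow_of_le_one h0.le hlam1.le
    have := length_le_wordP hp (prefixList ω n)
    rwa [prefixList_length] at this
  have h3 : ∀ c d : ℝ, c * x + d - (c * y + d) = c * (x - y) := fun c d => by ring
  rw [h3, abs_mul, abs_of_pos (pow_pos h0 _)]
  exact (mul_le_mul h2 h1 (abs_nonneg _) (pow_pos h0 _).le).trans_lt hn

open MeasureTheory in
lemma exists_bernoulli {lam : ℝ} (h0 : 0 < lam) {p : Fin m → ℕ}
    {s : ℝ} (hsum : ∑ i : Fin m, lam ^ ((p i : ℝ) * s) = 1) :
    ∃ μ : Measure (ℕ → Fin m), IsProbabilityMeasure μ ∧ ∀ σ : List (Fin m),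
      μ {ω | prefixList ω σ.length = σ} ≤ ENNReal.ofReal (lam ^ ((wordP p σ : ℝ) * s)) := by
  have hpos : ∀ i, 0 ≤ lam ^ ((p i : ℝ) * s) := fun i => (Real.rpow_pos_of_pos h0 _).le
  let q : PMF (Fin m) := PMF.ofFintype (fun i => ENNReal.ofReal (lam ^ ((p i : ℝ) * s))) (by
    rw [← ENNReal.ofReal_sum_of_nonneg fun i _ => hpos i, hsum, ENNReal.ofReal_one])
  refine ⟨Measure.infinitePi fun _ => q.toMeasure, inferInstance, fun σ => ?_⟩
  rcases Set.eq_empty_or_nonempty {ω : ℕ → Fin m | prefixList ω σ.length = σ} with h | ⟨ω₀, hω₀⟩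
  · rw [h]; simp
  · have hω₀' : prefixList ω₀ σ.length = σ := hω₀
    have hsub : {ω : ℕ → Fin m | prefixList ω σ.length = σ} ⊆
        Set.pi (Finset.range σ.length : Set ℕ) fun k => {ω₀ k} := by
      intro ω hω k hk
      have hω' : prefixList ω σ.length = σ := hω
      exact (prefixList_eq_iff ω ω₀ σ.length).1 (hω'.trans hω₀'.symm) k (by simpa using hk)
    refine (measure_mono hsub).trans ?_
    rw [Measure.infinitePi_pi (fun _ => q.toMeasure) (s := Finset.range σ.length)
      (t := fun k => {ω₀ k}) (fun _ _ => MeasurableSet.singleton _)]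
    apply le_of_eq
    have h1 : ∀ i, q.toMeasure {i} = ENNReal.ofReal (lam ^ ((p i : ℝ) * s)) := by
      intro i
      rw [PMF.toMeasure_apply_singleton _ _ (MeasurableSet.singleton _)]
      rfl
    simp only [h1]
    rw [← ENNReal.ofReal_prod_of_nonneg fun k _ => hpos _, ← Real.rpow_sum_of_pos h0]
    congr 2
    rw [← Finset.sum_mul]
    congr 1
    have h2 := wordP_prefix p ω₀ σ.length
    rw [hω₀'] at h2
    rw [h2]; push_cast; rfl

open MeasureTheory in
lemma dim_ge {lam : ℝ} (h0 : 0 < lam) (hlam1 : lam < 1) (hPisot : IsPisot lam⁻¹)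
    {p : Fin m → ℕ} (hp : ∀ i, 1 ≤ p i)
    {b : Fin m → ℝ} (hbQ : ∀ i, ∃ q : ℚ, b i = (q : ℝ))
    {E : Set ℝ} (hEc : IsCompact E) (hEne : E.Nonempty)
    (hE : E = ⋃ i, Smap lam p b i '' E) (hN : NEO lam p b)
    {s : ℝ} (hs : 0 < s) (hsum : ∑ i : Fin m, lam ^ ((p i : ℝ) * s) = 1) :
    ENNReal.ofReal s ≤ dimH E := by
  obtain ⟨P, hP1, hP⟩ : ∃ P : ℕ, 1 ≤ P ∧ ∀ i, p i ≤ P :=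
    ⟨1 + ∑ i, p i, by omega, fun i => by
      have := Finset.single_le_sum (f := p) (fun _ _ => Nat.zero_le _) (Finset.mem_univ i)
      omega⟩
  obtain ⟨M, hM⟩ : ∃ M : ℝ, ∀ x ∈ E, |x| ≤ M := by
    obtain ⟨M, hM⟩ := hEc.isBounded.exists_norm_le
    exact ⟨M, hM⟩
  have hM0 : 0 ≤ M := by
    obtain ⟨e, he⟩ := hEne
    exact (abs_nonneg e).trans (hM e he)
  obtain ⟨N, hcount⟩ := count h0 hPisot hp hbQ hN P ((1 + 2 * M) * (lam ^ P)⁻¹)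
  obtain ⟨π, hπc, hπ⟩ := exists_coding h0 hlam1 hp hEc hEne hE
  obtain ⟨μ, hμ, hcyl⟩ := exists_bernoulli h0 hsum
  have hπm : Measurable π := hπc.measurable
  have hmass : ∀ (n : ℕ) (A : Set ℝ), Metric.ediam A ≤ ENNReal.ofReal (lam ^ n) →
      μ (π ⁻¹' A) ≤ ENNReal.ofReal (N * lam ^ ((n : ℝ) * s)) := by
    intro n A hA
    set J : Set (List (Fin m)) := {σ | n ≤ wordP p σ ∧ wordP p σ < n + P ∧
      ∃ e ∈ E, SW lam p b σ e ∈ A} with hJ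
    have hcov : π ⁻¹' A ⊆ ⋃ σ ∈ J, {ω | prefixList ω σ.length = σ} := by
      intro ω hω
      have hex : ∃ k, n ≤ wordP p (prefixList ω k) := ⟨n, by
        have := length_le_wordP hp (prefixList ω n)
        rwa [prefixList_length] at this⟩
      classical
      have hk1 := Nat.find_spec hex
      have hk2 : wordP p (prefixList ω (Nat.find hex)) < n + P := by
        rcases h : Nat.find hex with _ | k
        · simp [prefixList, wordP]; omega
        · have := Nat.find_min hex (m := k) (by omega)
          rw [prefixList_succ, wordP_append]
          have h4 := hP (ω k)
          simp only [wordP, List.map_cons, List.map_nil, List.sum_cons, List.sum_nil] at this ⊢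
          omega
      obtain ⟨e, he, hee⟩ := hπ ω (Nat.find hex)
      refine Set.mem_biUnion (x := prefixList ω (Nat.find hex)) ⟨hk1, hk2, e, he, ?_⟩ ?_
      · rw [hee]; exact hω
      · simp only [Set.mem_ofPred_eq, prefixList_length]
    have hJcard : J.Finite ∧ J.ncard ≤ N := by
      rcases J.eq_empty_or_nonempty with h | ⟨σ₀, h1, h2, e₀, he₀, hA₀⟩
      · rw [h]; simp
      · have hsub : J ⊆ {α : List (Fin m) | wordP p α ≤ wordP p σ₀ + P ∧
            wordP p σ₀ ≤ wordP p α + P ∧ |wordB lam p b α - wordB lam p b σ₀| ≤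
              (1 + 2 * M) * (lam ^ P)⁻¹ * lam ^ wordP p σ₀} := by
          rintro σ ⟨h3, h4, e, he, hAe⟩
          refine ⟨by omega, by omega, ?_⟩
          have hd : |SW lam p b σ e - SW lam p b σ₀ e₀| ≤ lam ^ n := by
            have := (Metric.edist_le_ediam_of_mem hAe hA₀).trans hA
            rw [edist_dist, ENNReal.ofReal_le_ofReal_iff (pow_pos h0 n).le, Real.dist_eq] at this
            exact this
          have h5 : lam ^ wordP p σ ≤ lam ^ n := pow_le_pow_of_le_one h0.le hlam1.le h3
          have h6 : lam ^ wordP p σ₀ ≤ lam ^ n := pow_le_pow_of_le_one h0.le hlam1.le h1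
          have h7 : lam ^ n * lam ^ P ≤ lam ^ wordP p σ₀ := by
            rw [← pow_add]; exact pow_le_pow_of_le_one h0.le hlam1.le h2.le
          have h7' : lam ^ n ≤ (lam ^ P)⁻¹ * lam ^ wordP p σ₀ := by
            rw [← div_eq_inv_mul, le_div_iff₀ (pow_pos h0 P)]; exact h7
          have h8 : |lam ^ wordP p σ * e| ≤ lam ^ n * M := by
            rw [abs_mul, abs_of_pos (pow_pos h0 _)]
            exact mul_le_mul h5 (hM e he) (abs_nonneg _) (pow_pos h0 _).le
          have h9 : |lam ^ wordP p σ₀ * e₀| ≤ lam ^ n * M := by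
            rw [abs_mul, abs_of_pos (pow_pos h0 _)]
            exact mul_le_mul h6 (hM e₀ he₀) (abs_nonneg _) (pow_pos h0 _).le
          have h10 : |wordB lam p b σ - wordB lam p b σ₀| ≤ (1 + 2 * M) * lam ^ n := by
            rw [SW_eq, SW_eq] at hd
            rw [abs_le] at hd h8 h9 ⊢
            constructor <;> linarith [hd.1, hd.2, h8.1, h8.2, h9.1, h9.2]
          refine h10.trans ?_
          rw [mul_assoc]
          exact mul_le_mul_of_nonneg_left h7' (by linarith)
        exact ⟨(hcount σ₀).1.subset hsub,
          (Set.ncard_le_ncard hsub (hcount σ₀).1).trans (hcount σ₀).2⟩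
    obtain ⟨hJf, hJN⟩ := hJcard
    have hcov' : π ⁻¹' A ⊆ ⋃ σ ∈ hJf.toFinset, {ω | prefixList ω σ.length = σ} := by
      simpa using hcov
    refine (measure_mono hcov').trans ((measure_biUnion_finset_le _ _).trans ?_)
    have hbd : ∀ σ ∈ hJf.toFinset, μ {ω | prefixList ω σ.length = σ} ≤
        ENNReal.ofReal (lam ^ ((n : ℝ) * s)) := by
      intro σ hσ
      have hσ' : σ ∈ J := by simpa using hσ
      refine (hcyl σ).trans (ENNReal.ofReal_le_ofReal ?_)
      apply Real.rpow_le_rpow_of_exponent_ge h0 hlam1.le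
      have : (n : ℝ) ≤ wordP p σ := by exact_mod_cast hσ'.1
      exact mul_le_mul_of_nonneg_right this hs.le
    refine (Finset.sum_le_card_nsmul _ _ _ hbd).trans ?_
    rw [← Set.ncard_eq_toFinset_card J hJf, nsmul_eq_mul, ENNReal.ofReal_mul (by positivity),
      ENNReal.ofReal_natCast]
    gcongr
  set c : ℝ := N * lam ^ (-s) + 1 with hc
  have hls : 0 < lam ^ (-s) := Real.rpow_pos_of_pos h0 _
  have hcpos : 0 < c := by positivity
  have hbound : ∀ A : Set ℝ, Metric.ediam A ≤ 1 →
      μ.map π A ≤ ENNReal.ofReal c * Metric.ediam A ^ s := by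
    intro A hA
    have hle : μ.map π A ≤ μ (π ⁻¹' closure A) := by
      rw [← Measure.map_apply hπm isClosed_closure.measurableSet]
      exact measure_mono subset_closure
    have hmass' : ∀ n : ℕ, Metric.ediam A ≤ ENNReal.ofReal (lam ^ n) →
        μ.map π A ≤ ENNReal.ofReal (N * lam ^ ((n : ℝ) * s)) := fun n hn =>
      hle.trans (hmass n _ (by rwa [Metric.ediam_closure]))
    have hfin : Metric.ediam A ≠ ⊤ := ne_top_of_le_ne_top ENNReal.one_ne_top hA
    obtain ⟨D, hD0, hD⟩ : ∃ D : ℝ, 0 ≤ D ∧ Metric.ediam A = ENNReal.ofReal D :=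
      ⟨_, ENNReal.toReal_nonneg, (ENNReal.ofReal_toReal hfin).symm⟩
    rw [hD] at hmass' hA ⊢
    have hD1 : D ≤ 1 := by
      rw [← ENNReal.ofReal_one] at hA
      exact (ENNReal.ofReal_le_ofReal_iff zero_le_one).1 hA
    rcases hD0.eq_or_lt with h | hDpos
    · have hz : μ.map π A ≤ 0 := by
        have hlim : Tendsto (fun n : ℕ => ENNReal.ofReal (N * lam ^ ((n : ℝ) * s))) atTop
            (nhds (ENNReal.ofReal (N * 0))) := by
          apply ENNReal.tendsto_ofReal
          apply Tendsto.const_mul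
          have h1 : ∀ n : ℕ, lam ^ ((n : ℝ) * s) = (lam ^ s) ^ n := by
            intro n
            rw [mul_comm, Real.rpow_mul h0.le, Real.rpow_natCast]
          simp only [h1]
          exact tendsto_pow_atTop_nhds_zero_of_lt_one (Real.rpow_pos_of_pos h0 _).le
            (Real.rpow_lt_one h0.le hlam1 hs)
        rw [mul_zero, ENNReal.ofReal_zero] at hlim
        refine ge_of_tendsto' hlim fun n => hmass' n ?_
        rw [← h]
        exact ENNReal.ofReal_le_ofReal (pow_pos h0 n).le
      exact hz.trans zero_le
    · obtain ⟨n, hn1, hn2⟩ := exists_nat_pow_near_of_lt_one hDpos hD1 h0 hlam1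
      refine (hmass' n (ENNReal.ofReal_le_ofReal hn2)).trans ?_
      rw [ENNReal.ofReal_rpow_of_nonneg hD0 hs.le, ← ENNReal.ofReal_mul hcpos.le]
      apply ENNReal.ofReal_le_ofReal
      have h1 : lam ^ ((n : ℝ) * s) = lam ^ (-s) * (lam ^ (n + 1)) ^ s := by
        rw [← Real.rpow_natCast, ← Real.rpow_mul h0.le, ← Real.rpow_add h0]
        congr 1; push_cast; ring
      have h2 : (lam ^ (n + 1)) ^ s ≤ D ^ s :=
        Real.rpow_le_rpow (pow_pos h0 _).le hn1.le hs.le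
      have h3 : 0 ≤ D ^ s := Real.rpow_nonneg hD0 _
      calc (N : ℝ) * lam ^ ((n : ℝ) * s) = N * lam ^ (-s) * (lam ^ (n + 1)) ^ s := by rw [h1]; ring
        _ ≤ N * lam ^ (-s) * D ^ s := mul_le_mul_of_nonneg_left h2 (by positivity)
        _ ≤ c * D ^ s := by rw [hc]; linarith
  have hc0 : ENNReal.ofReal c ≠ 0 := by simpa using hcpos
  have hct : ENNReal.ofReal c ≠ ⊤ := ENNReal.ofReal_ne_top
  have hHM : (ENNReal.ofReal c)⁻¹ • μ.map π ≤ Measure.hausdorffMeasure s := by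
    refine Measure.le_hausdorffMeasure s _ 1 one_pos fun A hA => ?_
    rw [Measure.smul_apply, smul_eq_mul]
    calc _ ≤ (ENNReal.ofReal c)⁻¹ * (ENNReal.ofReal c * Metric.ediam A ^ s) := by
          gcongr; exact hbound A hA
      _ = _ := by rw [← mul_assoc, ENNReal.inv_mul_cancel hc0 hct, one_mul]
  have hne : Measure.hausdorffMeasure s E ≠ 0 := by
    have h1 := hHM E
    rw [Measure.smul_apply, smul_eq_mul, Measure.map_apply hπm hEc.isClosed.measurableSet] at h1
    have h2 : π ⁻¹' E = Set.univ := by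
      ext ω
      simp only [Set.mem_preimage, Set.mem_univ, iff_true]
      obtain ⟨e, he, hee⟩ := hπ ω 0
      rw [← hee]
      exact SW_mem hE _ he
    rw [h2, measure_univ, mul_one] at h1
    intro h3
    rw [h3] at h1
    exact (ENNReal.inv_ne_zero.2 hct) (le_antisymm h1 zero_le)
  have : (Real.toNNReal s : ENNReal) ≤ dimH E := by
    apply le_dimH_of_hausdorffMeasure_ne_zero
    rw [Real.coe_toNNReal s hs.le]
    exact hne
  exact this

theorem stmt13 (lam : ℝ) (hlam0 : 0 < lam) (hlam1 : lam < 1)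
    (hPisot : IsPisot lam⁻¹)
    {m : ℕ} (hm : 2 ≤ m) (p : Fin m → ℕ) (hp : ∀ i, 1 ≤ p i)
    (b : Fin m → ℝ) (hbQ : ∀ i, ∃ q : ℚ, b i = (q : ℝ))
    (E : Set ℝ) (hEc : IsCompact E) (hEne : E.Nonempty)
    (hEfix : E = ⋃ i, Smap lam p b i '' E)
    (s : ℝ) (hs : 0 < s) (hsum : ∑ i : Fin m, lam ^ ((p i : ℝ) * s) = 1) :
    dimH E = ENNReal.ofReal s ↔ OSC lam p b := by
  constructor
  · intro h
    exact osc_of_neo hlam0 hlam1 hPisot hm hp hbQ hEc hEne hEfix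
      (neo_of_dim hlam0 hlam1 hp hEc hEfix hs hsum h.ge)
  · intro h
    exact le_antisymm (dim_le hlam0 hlam1 hp hEc hEfix hs hsum)
      (dim_ge hlam0 hlam1 hPisot hp hbQ hEc hEne hEfix (neo_of_osc hlam0 hp h) hs hsum)

end PVOSC
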